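/- Let q = 3^n with n > 2, let F_q be the finite field with q elements, and let m ∈ F_q be a fixed non-square (m is not the square of any element of F_q). For every pair (ℓ_0, m_0) ∈ F_q^2 with (ℓ_0, m_0) ≠ (0,0), the map x ↦ (m·m_0^2 − ℓ_0^2)^9 x^9 + m_0^9 ℓ_0^3 x^3 + m^{−1} m_0^{10} x is a bijection of F_q; that is, (m m_0^2 − ℓ_0^2)^9 X^9 + m_0^9 ℓ_0^3 X^3 + m^{−1} m_0^{10} X is an F_3-linearized permutation polynomial of F_q. -/

import Mathlib

/-!
The polynomial of the theorem is the `9`-th power of the adjoint, for the trace form, of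
`L(w) = (m m₀² - ℓ₀²) w + m₀³ ℓ₀ w³ + m⁻¹ m₀¹⁰ w⁹`. The trace form is nondegenerate and the field is
finite, so it suffices that `L` has no nonzero root. Now `L(w)` is quadratic in `ℓ₀`, and in
characteristic `3` its discriminant is `m⁻¹` times the square of `m₀ w (m - (m₀ w)⁴)`. As `m⁻¹` is
not a square, a root `w` forces this discriminant to vanish, hence `m₀ w = 0` because `m` is not a
fourth power; then `ℓ₀² w = 0` as well, so `w = 0`.
-/

section LinearizedMap

open FiniteField

variable (F : Type*) {K : Type*} [Field F] [Fintype F] [Field K] [Algebra F K] {d : ℕ}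

/-- The `F`-linear map `x ↦ ∑ i, a i * x ^ q ^ i`, where `q` is the order of the finite field `F`,
induced by the linearized polynomial with coefficients `a`. -/
noncomputable def linearizedMap (a : Fin (d + 1) → K) : K →ₗ[F] K :=
  ∑ i, a i • (frobeniusAlgHom F K ^ (i : ℕ)).toLinearMap

theorem linearizedMap_apply (a : Fin (d + 1) → K) (x : K) :
    linearizedMap F a x = ∑ i, a i * x ^ Fintype.card F ^ (i : ℕ) := by
  simp [linearizedMap, coe_frobeniusAlgHom, pow_iterate]

/-- The coefficients of the adjoint, for the trace form, of the map `x ↦ ∑ i, a i * x ^ q ^ i`. This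
adjoint is `z ↦ ∑ i, (a i * z) ^ q ^ (-i)`; it is raised to the power `q ^ d` to be a polynomial. -/
def adjointCoeff (q : ℕ) (a : Fin (d + 1) → K) : Fin (d + 1) → K :=
  fun i ↦ a i.rev ^ q ^ (i : ℕ)

theorem trace_pow_card_pow [Algebra.IsAlgebraic F K] (x : K) (i : ℕ) :
    Algebra.trace F K (x ^ Fintype.card F ^ i) = Algebra.trace F K x := by
  have h := Algebra.trace_eq_of_algEquiv (frobeniusAlgEquivOfAlgebraic F K ^ i) x
  rwa [AlgEquiv.coe_pow, coe_frobeniusAlgEquivOfAlgebraic_iterate] at h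

theorem trace_mul_linearizedMap [Algebra.IsAlgebraic F K] (a : Fin (d + 1) → K) (z w : K) :
    Algebra.trace F K (z * linearizedMap F a w) =
      Algebra.trace F K
        (w ^ Fintype.card F ^ d * linearizedMap F (adjointCoeff (Fintype.card F) a) z) := by
  simp only [linearizedMap_apply, adjointCoeff, Finset.mul_sum, map_sum]
  rw [← Equiv.sum_comp Fin.revPerm]
  refine Finset.sum_congr rfl fun i _ ↦ ?_
  have hi : (i.rev : ℕ) + i = d := by rw [Fin.val_rev]; lia
  rw [← trace_pow_card_pow F _ i, Fin.revPerm_apply, mul_pow, mul_pow, ← pow_mul, ← pow_add, hi]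
  congr 1
  ring

theorem linearizedMap_adjointCoeff_injective [FiniteDimensional F K] {a : Fin (d + 1) → K}
    (ha : Function.Injective (linearizedMap F a)) :
    Function.Injective (linearizedMap F (adjointCoeff (Fintype.card F) a)) := by
  refine (injective_iff_map_eq_zero _).2 fun z hz ↦ (traceForm_nondegenerate F K).1 z fun y ↦ ?_
  obtain ⟨w, rfl⟩ := LinearMap.surjective_of_injective ha y
  rw [Algebra.traceForm_apply, trace_mul_linearizedMap, hz, mul_zero, map_zero]

end LinearizedMap

section NonSquare

variable {K : Type*} [Field K] {m : K}

theorem eq_zero_and_eq_zero_of_mul_sq_eq_sq (hm : ¬IsSquare m) {x y : K}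
    (h : m * x ^ 2 = y ^ 2) : x = 0 ∧ y = 0 := by
  have hx : x = 0 := by
    by_contra hx
    exact hm ⟨y / x, by field_simp; exact h⟩
  exact ⟨hx, by simpa [hx] using h.symm⟩

variable [CharP K 3]

theorem mul_sq_eq_sq_of_trinomial_eq_zero (hm : m ≠ 0) {s t w : K}
    (h : (m * t ^ 2 - s ^ 2) * w + t ^ 3 * s * w ^ 3 + m⁻¹ * t ^ 10 * w ^ 9 = 0) :
    m * (w * (s + t ^ 3 * w ^ 2)) ^ 2 = (t * w * (m - (t * w) ^ 4)) ^ 2 := by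
  have three_eq_zero : (3 : K) = 0 := CharP.cast_eq_zero K 3
  field_simp at h
  -- Complete the square in `s`, and use `m² + m u + u² = (m - u)²` for `u = (t w)⁴`, as `3 = 0`.
  linear_combination (-w) * h + (m * w ^ 4 * s * t ^ 3 + m * w ^ 6 * t ^ 6) * three_eq_zero

theorem eq_zero_of_trinomial_eq_zero (hm : ¬IsSquare m) {s t w : K} (hst : (s, t) ≠ (0, 0))
    (h : (m * t ^ 2 - s ^ 2) * w + t ^ 3 * s * w ^ 3 + m⁻¹ * t ^ 10 * w ^ 9 = 0) : w = 0 := by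
  have hm₀ : m ≠ 0 := fun hm₀ ↦ hm (hm₀ ▸ IsSquare.zero)
  obtain ⟨hs, ht⟩ := eq_zero_and_eq_zero_of_mul_sq_eq_sq hm <|
    mul_sq_eq_sq_of_trinomial_eq_zero hm₀ h
  have hfourth : m - (t * w) ^ 4 ≠ 0 := fun h4 ↦ hm ⟨(t * w) ^ 2, by linear_combination h4⟩
  by_contra hw
  have ht₀ : t = 0 := by simpa [hfourth, hw] using ht
  have hs₀ : s = 0 := by simpa [ht₀, hw] using hs
  exact hst (by rw [hs₀, ht₀])

end NonSquare

theorem statement15_general {K : Type*} [Field K] [Finite K] [CharP K 3] {m : K}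
    (hm : ¬IsSquare m) {ℓ₀ m₀ : K} (hne : (ℓ₀, m₀) ≠ (0, 0)) :
    Function.Bijective (fun x : K =>
      (m * m₀ ^ 2 - ℓ₀ ^ 2) ^ 9 * x ^ 9 + m₀ ^ 9 * ℓ₀ ^ 3 * x ^ 3 + m⁻¹ * m₀ ^ 10 * x) := by
  let _ : Algebra (ZMod 3) K := ZMod.algebra K 3
  let a : Fin 3 → K := ![m * m₀ ^ 2 - ℓ₀ ^ 2, m₀ ^ 3 * ℓ₀, m⁻¹ * m₀ ^ 10]
  have ha : Function.Injective (linearizedMap (ZMod 3) a) := by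
    refine (injective_iff_map_eq_zero _).2 fun w hw ↦ eq_zero_of_trinomial_eq_zero hm hne ?_
    simpa [linearizedMap_apply, Fin.sum_univ_three, a] using hw
  have hadj : ⇑(linearizedMap (ZMod 3) (adjointCoeff (Fintype.card (ZMod 3)) a)) = fun x ↦
      (m * m₀ ^ 2 - ℓ₀ ^ 2) ^ 9 * x ^ 9 + m₀ ^ 9 * ℓ₀ ^ 3 * x ^ 3 + m⁻¹ * m₀ ^ 10 * x := by
    funext x
    simp only [linearizedMap_apply, adjointCoeff, ZMod.card, Fin.sum_univ_three, Fin.isValue,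
      Nat.reduceAdd, Fin.reduceRev, Fin.rev_zero, Fin.reduceLast, Matrix.cons_val,
      Fin.coe_ofNat_eq_mod, Nat.reduceMod, a]
    ring
  rw [← hadj]
  exact Finite.injective_iff_bijective.1 (linearizedMap_adjointCoeff_injective (ZMod 3) ha)

/-- In `F_{3^n}`, `n > 2`, with `m` a fixed non-square: for every `(ℓ₀,m₀) ≠ (0,0)` the map
`x ↦ (m·m₀² − ℓ₀²)⁹ x⁹ + m₀⁹ ℓ₀³ x³ + m⁻¹ m₀^{10} x` is a bijection of `F_{3^n}`; i.e.
`(m m₀² − ℓ₀²)⁹ X⁹ + m₀⁹ ℓ₀³ X³ + m⁻¹ m₀^{10} X` is an `F_3`-linearized permutation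
polynomial of `F_{3^n}`. -/
theorem statement15 (n : ℕ) (hn : 2 < n)
    (K : Type*) [Field K] [Fintype K] (hcard : Fintype.card K = 3 ^ n)
    (m : K) (hm : ∀ x : K, x ^ 2 ≠ m)
    (ℓ₀ m₀ : K) (hne : (ℓ₀, m₀) ≠ (0, 0)) :
    Function.Bijective (fun x : K =>
      (m * m₀ ^ 2 - ℓ₀ ^ 2) ^ 9 * x ^ 9 + m₀ ^ 9 * ℓ₀ ^ 3 * x ^ 3 + m⁻¹ * m₀ ^ 10 * x) := by
  have : CharP K 3 := charP_of_card_eq_prime_pow hcard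
  exact statement15_general (fun ⟨y, hy⟩ ↦ hm y (by rw [hy, sq])) hne
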